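/- Let A and B be real n×n stable matrices with A − B of rank one. Then the pair (A,B) does NOT have a common quadratic Lyapunov function if and only if there exist nonzero vectors v, w ∈ ℝⁿ such that A·v·vᵀ + v·vᵀ·Aᵀ + B·w·wᵀ + w·wᵀ·Bᵀ = 0. -/

import Mathlib

open Matrix

/-- A real square matrix is *stable* if every eigenvalue (over ℂ) has negative real part. -/
def IsStable {n : ℕ} (A : Matrix (Fin n) (Fin n) ℝ) : Prop :=
  ∀ μ : ℂ, μ ∈ spectrum ℂ (A.map (algebraMap ℝ ℂ)) → μ.re < 0

/-- `(A,B)` has a common quadratic Lyapunov function: a real symmetric positive definite `P`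
with `P·A + Aᵀ·P` and `P·B + Bᵀ·P` both negative definite. -/
def HasCQLF {n : ℕ} (A B : Matrix (Fin n) (Fin n) ℝ) : Prop :=
  ∃ P : Matrix (Fin n) (Fin n) ℝ,
    P.PosDef ∧ (-(P * A + Aᵀ * P)).PosDef ∧ (-(P * B + Bᵀ * P)).PosDef

theorem IsStable.eq_zero_of_mulVec_eq_smul {n : ℕ} {A : Matrix (Fin n) (Fin n) ℝ}
    (hA : IsStable A) {μ : ℂ} (hμ : 0 ≤ μ.re) {z : Fin n → ℂ}
    (hz : A.map (algebraMap ℝ ℂ) *ᵥ z = μ • z) : z = 0 := by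
  have hμA : μ ∉ spectrum ℂ (A.map (algebraMap ℝ ℂ)) := fun h => (hA μ h).not_ge hμ
  rw [spectrum.notMem_iff] at hμA
  refine mulVec_injective_of_isUnit hμA ?_
  simp only [sub_mulVec, mulVec_zero, hz, Algebra.algebraMap_eq_smul_one, smul_mulVec, one_mulVec,
    sub_self]

theorem IsStable.eq_zero_of_mulVec_eq_smul_real {n : ℕ} {A : Matrix (Fin n) (Fin n) ℝ}
    (hA : IsStable A) {t : ℝ} (ht : 0 ≤ t) {x : Fin n → ℝ} (hx : A *ᵥ x = t • x) : x = 0 := by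
  have h := hA.eq_zero_of_mulVec_eq_smul (μ := (t : ℂ)) (by simpa using ht)
    (z := fun i => (x i : ℂ)) (by
      ext i
      have h1 := congrArg (fun r : ℝ => (r : ℂ)) (congrFun hx i)
      simpa [mulVec, dotProduct] using h1)
  ext i
  simpa using congrFun h i

theorem Matrix.exists_le_det_smul_one_add_eq_zero {n : ℕ} (M : Matrix (Fin n) (Fin n) ℝ) {s : ℝ}
    (hs : (s • (1 : Matrix (Fin n) (Fin n) ℝ) + M).det ≤ 0) :
    ∃ t, s ≤ t ∧ (t • (1 : Matrix (Fin n) (Fin n) ℝ) + M).det = 0 := by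
  have heval : ∀ t : ℝ, (-M).charpoly.eval t = (t • (1 : Matrix (Fin n) (Fin n) ℝ) + M).det := by
    intro t
    rw [eval_charpoly, sub_neg_eq_add, smul_one_eq_diagonal, scalar_apply]
  have hn : n ≠ 0 := by
    rintro rfl
    simp at hs
    linarith
  have hdeg : 0 < (-M).charpoly.degree := by
    rw [charpoly_degree_eq_dim]
    simpa using Nat.pos_of_ne_zero hn
  have htop := Polynomial.tendsto_atTop_of_leadingCoeff_nonneg _ hdeg
    (by rw [(charpoly_monic _).leadingCoeff]; exact zero_le_one)
  obtain ⟨T, hT, hsT⟩ :=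
    ((htop.eventually_ge_atTop 0).and (Filter.eventually_ge_atTop s)).exists
  obtain ⟨t, ht, h0⟩ := intermediate_value_Icc hsT
    ((-M).charpoly.continuous.continuousOn) (show (0 : ℝ) ∈ Set.Icc _ _ from
      ⟨by rw [heval]; exact hs, hT⟩)
  exact ⟨t, ht.1, by rw [← heval]; exact h0⟩

theorem IsStable.neg_det_pos {n : ℕ} {A : Matrix (Fin n) (Fin n) ℝ} (hA : IsStable A) :
    0 < (-A).det := by
  by_contra h
  obtain ⟨t, ht, hdet⟩ := exists_le_det_smul_one_add_eq_zero (-A) (s := 0) (by simpa using h)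
  obtain ⟨x, hx, hx0⟩ := exists_mulVec_eq_zero_iff.2 hdet
  refine hx (hA.eq_zero_of_mulVec_eq_smul_real ht ?_)
  rw [add_mulVec, smul_mulVec, one_mulVec, neg_mulVec] at hx0
  exact (sub_eq_zero.1 ((sub_eq_add_neg _ _).trans hx0)).symm

theorem IsStable.det_mul_pos {n : ℕ} {A B : Matrix (Fin n) (Fin n) ℝ} (hA : IsStable A)
    (hB : IsStable B) : 0 < (A * B).det := by
  rw [← neg_mul_neg, det_mul]
  exact mul_pos hA.neg_det_pos hB.neg_det_pos

theorem IsStable.sq_smul_one_add_sq_det_pos {n : ℕ} {A : Matrix (Fin n) (Fin n) ℝ}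
    (hA : IsStable A) (ω : ℝ) :
    0 < ((ω ^ 2) • (1 : Matrix (Fin n) (Fin n) ℝ) + A * A).det := by
  by_contra h
  obtain ⟨t, ht, hdet⟩ := exists_le_det_smul_one_add_eq_zero (A * A) (not_lt.1 h)
  obtain ⟨x, hx, hx0⟩ := exists_mulVec_eq_zero_iff.2 hdet
  have ht0 : 0 ≤ t := (sq_nonneg ω).trans ht
  rw [add_mulVec, smul_mulVec, one_mulVec, ← mulVec_mulVec] at hx0
  set y := A *ᵥ x with hy
  have hAy : A *ᵥ y = -(t • x) := by rw [eq_neg_iff_add_eq_zero, add_comm]; exact hx0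
  have hmap : ∀ u : Fin n → ℝ, A.map (algebraMap ℝ ℂ) *ᵥ (fun i => (u i : ℂ)) =
      fun i => (((A *ᵥ u) i : ℝ) : ℂ) := by
    intro u; ext i; simp [mulVec, dotProduct]
  have hsq : ((Real.sqrt t : ℝ) : ℂ) * (Real.sqrt t : ℝ) = t := by
    rw [← Complex.ofReal_mul, Real.mul_self_sqrt ht0]
  have hz : (fun i => (y i : ℂ)) + (Complex.I * (Real.sqrt t : ℝ)) • (fun i => (x i : ℂ)) = 0 := by
    refine hA.eq_zero_of_mulVec_eq_smul (μ := Complex.I * (Real.sqrt t : ℝ)) (by simp) ?_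
    rw [mulVec_add, mulVec_smul, hmap, hmap, hAy, ← hy]
    ext i
    simp only [Pi.add_apply, Pi.smul_apply, smul_eq_mul, Pi.neg_apply, Complex.ofReal_neg,
      Complex.ofReal_mul]
    linear_combination (-(x i : ℂ) * (Real.sqrt t : ℝ) * (Real.sqrt t : ℝ)) * Complex.I_mul_I +
      (x i : ℂ) * hsq
  refine hx (hA.eq_zero_of_mulVec_eq_smul_real le_rfl ?_)
  rw [zero_smul, ← hy]
  ext i
  simpa using congrArg Complex.re (congrFun hz i)

theorem Matrix.exists_eq_vecMulVec_of_rank_eq_one {n : ℕ} {M : Matrix (Fin n) (Fin n) ℝ}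
    (hM : M.rank = 1) : ∃ b c : Fin n → ℝ, M = vecMulVec b c := by
  rw [rank, finrank_eq_one_iff'] at hM
  obtain ⟨b, -, hb⟩ := hM
  choose c hc using fun j => hb ⟨M.mulVecLin (Pi.single j 1), LinearMap.mem_range_self _ _⟩
  refine ⟨b, c, ?_⟩
  ext i j
  have := congrFun (congrArg Subtype.val (hc j)) i
  simp at this
  rw [vecMulVec_apply, ← this, mul_comm]

theorem Matrix.exists_rank_one_of_det_eq_zero {n : ℕ} {A B : Matrix (Fin n) (Fin n) ℝ}
    {t : ℝ} (ht : 0 < t)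
    (hdet : (t • (1 : Matrix (Fin n) (Fin n) ℝ) + A * B).det = 0) :
    ∃ (v w : Fin n → ℝ), v ≠ 0 ∧ w ≠ 0 ∧
      A * vecMulVec v v + vecMulVec v v * Aᵀ + B * vecMulVec w w + vecMulVec w w * Bᵀ = 0 := by
  obtain ⟨w, hw, hw0⟩ := exists_mulVec_eq_zero_iff.2 hdet
  rw [add_mulVec, smul_mulVec, one_mulVec, ← mulVec_mulVec] at hw0
  have hs : 0 < Real.sqrt t := Real.sqrt_pos.2 ht
  set v := (Real.sqrt t)⁻¹ • (B *ᵥ w) with hv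
  have hBw : B *ᵥ w = Real.sqrt t • v := by rw [hv, smul_inv_smul₀ hs.ne']
  have hAv : A *ᵥ v = -(Real.sqrt t • w) := by
    have h1 : A *ᵥ (B *ᵥ w) = -(t • w) := by rw [eq_neg_iff_add_eq_zero, add_comm]; exact hw0
    rw [hv, mulVec_smul, h1, smul_neg, smul_smul, inv_mul_eq_div, Real.div_sqrt]
  refine ⟨v, w, ?_, hw, ?_⟩
  · intro h0
    rw [h0, mulVec_zero, eq_comm, neg_eq_zero, smul_eq_zero] at hAv
    exact hAv.elim hs.ne' hw
  · rw [mul_vecMulVec, mul_vecMulVec, vecMulVec_mul, vecMulVec_mul, vecMul_transpose,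
      vecMul_transpose, hAv, hBw]
    ext i j
    simp [vecMulVec_apply]

theorem Matrix.trace_mul_lyapunov_vecMulVec {n : ℕ} (P M : Matrix (Fin n) (Fin n) ℝ)
    (x : Fin n → ℝ) : (P * (M * vecMulVec x x + vecMulVec x x * Mᵀ)).trace =
      x ⬝ᵥ (P * M + Mᵀ * P) *ᵥ x := by
  rw [mul_add, trace_add, ← mul_assoc, ← mul_assoc, trace_mul_comm _ Mᵀ, ← mul_assoc,
    ← trace_add, ← add_mul, mul_vecMulVec, trace_vecMulVec, dotProduct_comm]

theorem HasCQLF.not_exists_rank_one {n : ℕ} {A B : Matrix (Fin n) (Fin n) ℝ} (h : HasCQLF A B)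
    {v w : Fin n → ℝ} (hv : v ≠ 0) (hw : w ≠ 0) :
    A * vecMulVec v v + vecMulVec v v * Aᵀ + B * vecMulVec w w + vecMulVec w w * Bᵀ ≠ 0 := by
  obtain ⟨P, -, hPA, hPB⟩ := h
  intro h0
  have h1 := hPA.dotProduct_mulVec_pos hv
  have h2 := hPB.dotProduct_mulVec_pos hw
  simp only [star_trivial, neg_mulVec, dotProduct_neg] at h1 h2
  have h3 := congrArg (fun M => (P * M).trace) h0
  simp only [mul_zero, trace_zero] at h3
  rw [add_assoc, mul_add, trace_add, trace_mul_lyapunov_vecMulVec,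
    trace_mul_lyapunov_vecMulVec] at h3
  linarith

attribute [local instance] Matrix.linftyOpNormedRing Matrix.linftyOpNormedAlgebra in
theorem Matrix.tendsto_pow_mulVec_of_norm_lt_one {n : ℕ} {C : Matrix (Fin n) (Fin n) ℂ}
    (hC : ∀ μ ∈ spectrum ℂ C, ‖μ‖ < 1) (z : Fin n → ℂ) :
    Filter.Tendsto (fun k : ℕ => (C ^ k) *ᵥ z) Filter.atTop (nhds 0) := by
  have hrad : spectralRadius ℂ C < 1 := by
    rcases isEmpty_or_nonempty (Fin n) with h | h
    · have : Subsingleton (Matrix (Fin n) (Fin n) ℂ) := inferInstance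
      simp [spectrum.SpectralRadius.of_subsingleton]
    · obtain ⟨μ, hμ, hr⟩ := spectrum.exists_nnnorm_eq_spectralRadius C
      rw [← hr]
      exact_mod_cast hC μ hμ
  have hpow : Filter.Tendsto (fun k : ℕ => C ^ k) Filter.atTop (nhds 0) := by
    obtain ⟨r, hr1, hr2⟩ := ENNReal.lt_iff_exists_nnreal_btwn.1 hrad
    have hev := (spectrum.pow_nnnorm_pow_one_div_tendsto_nhds_spectralRadius C).eventually_lt_const
      hr1
    refine squeeze_zero_norm' (a := fun k : ℕ => (r : ℝ) ^ k) ?_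
      (tendsto_pow_atTop_nhds_zero_of_lt_one r.2 (by exact_mod_cast hr2))
    filter_upwards [hev, Filter.eventually_gt_atTop 0] with k hk hk0
    have hk' : (0 : ℝ) < k := by exact_mod_cast hk0
    rw [one_div, ENNReal.rpow_inv_lt_iff hk', ENNReal.rpow_natCast] at hk
    exact_mod_cast hk.le
  have hcont : Continuous fun M : Matrix (Fin n) (Fin n) ℂ => M *ᵥ z := by fun_prop
  have h0 := (hcont.tendsto 0).comp hpow
  rwa [zero_mulVec] at h0

theorem Matrix.tendsto_pow_mulVec_of_norm_lt_one_real {n : ℕ} {C : Matrix (Fin n) (Fin n) ℝ}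
    (hC : ∀ μ ∈ spectrum ℂ (C.map (algebraMap ℝ ℂ)), ‖μ‖ < 1) (x : Fin n → ℝ) :
    Filter.Tendsto (fun k : ℕ => (C ^ k) *ᵥ x) Filter.atTop (nhds 0) := by
  have h := tendsto_pow_mulVec_of_norm_lt_one hC (fun i => (x i : ℂ))
  rw [tendsto_pi_nhds] at h ⊢
  intro i
  have hre := (Complex.continuous_re.tendsto _).comp (h i)
  refine hre.congr fun k => ?_
  have hk : C.map (algebraMap ℝ ℂ) ^ k = (C ^ k).map (algebraMap ℝ ℂ) :=
    (map_pow (algebraMap ℝ ℂ).mapMatrix C k).symm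
  rw [Function.comp_apply, hk]
  simp [mulVec, dotProduct]

theorem IsStable.isUnit_sub_one {n : ℕ} {A : Matrix (Fin n) (Fin n) ℝ} (hA : IsStable A) :
    IsUnit (A - 1).det := by
  rw [isUnit_iff_ne_zero]
  intro hdet
  obtain ⟨x, hx, hx0⟩ := exists_mulVec_eq_zero_iff.2 hdet
  refine hx (hA.eq_zero_of_mulVec_eq_smul_real zero_le_one ?_)
  rw [sub_mulVec, one_mulVec, sub_eq_zero] at hx0
  rw [one_smul, hx0]

theorem IsStable.norm_lt_one_of_mem_spectrum_cayley {n : ℕ} {A : Matrix (Fin n) (Fin n) ℝ}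
    (hA : IsStable A) {μ : ℂ}
    (hμ : μ ∈ spectrum ℂ (((A + 1) * (A - 1)⁻¹).map (algebraMap ℝ ℂ))) : ‖μ‖ < 1 := by
  set C := (A + 1) * (A - 1)⁻¹ with hCdef
  have hC : C.map (algebraMap ℝ ℂ) * (A.map (algebraMap ℝ ℂ) - 1) =
      A.map (algebraMap ℝ ℂ) + 1 := by
    have h1 : C * (A - 1) = A + 1 := by
      rw [hCdef, mul_assoc, nonsing_inv_mul _ hA.isUnit_sub_one, mul_one]
    have h2 := congrArg (algebraMap ℝ ℂ).mapMatrix h1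
    rwa [map_mul, map_sub, map_add, map_one] at h2
  set Ac := A.map (algebraMap ℝ ℂ) with hAc
  have hunit : IsUnit (Ac - 1) := by
    have h1 : (1 : ℂ) ∉ spectrum ℂ Ac := fun h => by
      have := hA 1 h
      norm_num at this
    rw [spectrum.notMem_iff, map_one] at h1
    simpa using h1.neg
  rw [spectrum.mem_iff, isUnit_iff_isUnit_det, isUnit_iff_ne_zero, not_not] at hμ
  obtain ⟨z, hz, hz0⟩ := exists_mulVec_eq_zero_iff.2 hμ
  obtain ⟨y, rfl⟩ := mulVec_surjective_iff_isUnit.2 hunit z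
  rw [sub_mulVec, sub_eq_zero, mulVec_mulVec, mulVec_mulVec, hC, Algebra.algebraMap_eq_smul_one,
    smul_one_mul, smul_mulVec, sub_mulVec, add_mulVec, one_mulVec] at hz0
  by_contra hlt
  have hy : y ≠ 0 := by
    rintro rfl
    simp at hz
  have hμ1 : μ - 1 ≠ 0 := by
    intro h
    rw [sub_eq_zero.1 h, one_smul] at hz0
    apply hy
    ext i
    have := congrFun hz0 i
    simp only [Pi.sub_apply, Pi.add_apply] at this
    simp only [Pi.zero_apply]
    linear_combination (-1 / 2 : ℂ) * this
  refine hy (hA.eq_zero_of_mulVec_eq_smul (μ := (μ + 1) / (μ - 1)) ?_ ?_)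
  · rw [Complex.div_re, ← add_div]
    refine div_nonneg ?_ (Complex.normSq_nonneg _)
    have h1 : 1 ≤ ‖μ‖ ^ 2 := one_le_pow₀ (not_lt.1 hlt)
    rw [Complex.sq_norm, Complex.normSq_apply] at h1
    simp
    nlinarith
  · ext i
    have := congrFun hz0 i
    simp only [Pi.sub_apply, Pi.add_apply, Pi.smul_apply, smul_eq_mul] at this ⊢
    field_simp
    linear_combination this

/-- Lyapunov's theorem: a symmetric matrix decreasing along a stable system is positive definite. -/
theorem IsStable.posDef_of_neg_lyapunov_posDef {n : ℕ} {A P : Matrix (Fin n) (Fin n) ℝ}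
    (hA : IsStable A) (hP : P.IsHermitian) (hPA : (-(P * A + Aᵀ * P)).PosDef) : P.PosDef := by
  set C := (A + 1) * (A - 1)⁻¹ with hCdef
  set q : (Fin n → ℝ) → ℝ := fun x => x ⬝ᵥ P *ᵥ x with hq
  have hdec : ∀ x, x ≠ 0 → q (C *ᵥ x) < q x := by
    intro x hx
    set y := (A - 1)⁻¹ *ᵥ x with hy
    have hxy : x = A *ᵥ y - y := by
      have h1 : (A - 1) *ᵥ y = x := by
        rw [hy, mulVec_mulVec, mul_nonsing_inv _ hA.isUnit_sub_one, one_mulVec]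
      rw [← h1, sub_mulVec, one_mulVec]
    have hCx : C *ᵥ x = A *ᵥ y + y := by
      rw [hCdef, ← mulVec_mulVec, ← hy, add_mulVec, one_mulVec]
    have hy0 : y ≠ 0 := by
      intro h
      rw [h] at hxy
      simp at hxy
      exact hx hxy
    have hpos := hPA.dotProduct_mulVec_pos hy0
    have hsymm : ∀ u v : Fin n → ℝ, u ⬝ᵥ P *ᵥ v = v ⬝ᵥ P *ᵥ u := by
      intro u v
      rw [dotProduct_mulVec, ← mulVec_transpose, dotProduct_comm]
      congr 2
    have hA1 : y ⬝ᵥ (Aᵀ * P) *ᵥ y = (A *ᵥ y) ⬝ᵥ P *ᵥ y := by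
      rw [← mulVec_mulVec, dotProduct_mulVec, vecMul_transpose]
    rw [star_trivial, neg_mulVec, dotProduct_neg, add_mulVec, dotProduct_add, hA1,
      ← mulVec_mulVec, hsymm y (A *ᵥ y)] at hpos
    rw [hCx]
    conv_rhs => rw [hxy]
    simp only [hq, mulVec_add, mulVec_sub, dotProduct_add, dotProduct_sub, add_dotProduct,
      sub_dotProduct]
    rw [hsymm y (A *ᵥ y)]
    linarith
  have hdec' : ∀ x, q (C *ᵥ x) ≤ q x := by
    intro x
    by_cases hx : x = 0
    · simp [hx, hq]
    · exact (hdec x hx).le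
  refine PosDef.of_dotProduct_mulVec_pos hP fun x hx => ?_
  rw [star_trivial]
  refine lt_of_le_of_lt ?_ (hdec x hx)
  have hiter : ∀ k : ℕ, q ((C ^ k) *ᵥ (C *ᵥ x)) ≤ q (C *ᵥ x) := by
    intro k
    induction k with
    | zero => simp
    | succ k ih =>
      rw [pow_succ', ← mulVec_mulVec]
      exact (hdec' _).trans ih
  have hlim := tendsto_pow_mulVec_of_norm_lt_one_real
    (fun μ hμ => hA.norm_lt_one_of_mem_spectrum_cayley hμ) (C *ᵥ x)
  have hqc : Continuous q := by fun_prop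
  have hq0 : q 0 = 0 := by simp [hq]
  have := (hqc.tendsto 0).comp hlim
  rw [hq0] at this
  exact le_of_tendsto' this hiter

theorem Matrix.PosSemidef.exists_sqrt_pseudoinverse {n : ℕ} {Z : Matrix (Fin n) (Fin n) ℝ}
    (hZ : Z.PosSemidef) : ∃ S R : Matrix (Fin n) (Fin n) ℝ,
      Sᵀ = S ∧ Rᵀ = R ∧ S * S = Z ∧ S * R = R * S ∧ S * R * S = S := by
  set φ := Unitary.conjStarAlgAut ℝ (Matrix (Fin n) (Fin n) ℝ) hZ.1.eigenvectorUnitary with hφ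
  set d := hZ.1.eigenvalues with hd
  have hZφ : Z = φ (diagonal d) := hZ.1.spectral_theorem
  have hsymm : ∀ e : Fin n → ℝ, (φ (diagonal e))ᵀ = φ (diagonal e) := by
    intro e
    rw [← conjTranspose_eq_transpose_of_trivial, ← star_eq_conjTranspose, ← map_star,
      star_eq_conjTranspose, diagonal_conjTranspose, star_trivial]
  refine ⟨φ (diagonal fun i => Real.sqrt (d i)), φ (diagonal fun i => (Real.sqrt (d i))⁻¹),
    hsymm _, hsymm _, ?_, ?_, ?_⟩
  · rw [← map_mul, diagonal_mul_diagonal, hZφ]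
    congr 2
    ext i
    exact Real.mul_self_sqrt (hZ.eigenvalues_nonneg i)
  · rw [← map_mul, ← map_mul, diagonal_mul_diagonal, diagonal_mul_diagonal]
    simp only [mul_comm]
  · rw [← map_mul, ← map_mul, diagonal_mul_diagonal, diagonal_mul_diagonal]
    simp only [mul_inv_mul_cancel]

/-- If `S` intertwines `F` with a skew-symmetric matrix, then `S * Sᵀ` is a sum of `z * zᴴ` over
eigenvectors `z` of `F` with purely imaginary eigenvalues, so a trace inequality for `S * Sᵀ` holds
for one of them. -/
theorem Matrix.exists_imaginary_eigenvector {n : ℕ} {F S K : Matrix (Fin n) (Fin n) ℝ}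
    (hSK : S * K = F * S) (hK : Kᵀ = -K) (hS : S * Sᵀ ≠ 0) {u c : Fin n → ℝ}
    (h : u ⬝ᵥ (S * Sᵀ) *ᵥ u ≤ u ⬝ᵥ (S * Sᵀ) *ᵥ c) :
    ∃ (ω : ℝ) (z : Fin n → ℂ), z ≠ 0 ∧
      F.map (algebraMap ℝ ℂ) *ᵥ z = (Complex.I * ω) • z ∧
      ‖(fun i => (u i : ℂ)) ⬝ᵥ z‖ ^ 2 ≤
        (((fun i => (c i : ℂ)) ⬝ᵥ z) * star ((fun i => (u i : ℂ)) ⬝ᵥ z)).re := by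
  have hH : (Complex.I • K.map (algebraMap ℝ ℂ)).IsHermitian := by
    ext i j
    have hij : K j i = -K i j := congrFun (congrFun hK i) j
    simp [hij]
  set x := fun k => (hH.eigenvectorBasis k).ofLp with hx
  set z := fun k => S.map (algebraMap ℝ ℂ) *ᵥ x k with hz
  set T : (Fin n → ℝ) → Fin n → ℂ := fun a k => (fun i => (a i : ℂ)) ⬝ᵥ z k with hT
  have hparseval : ∀ a b : Fin n → ℝ,
      ∑ k, T a k * star (T b k) = ((a ⬝ᵥ (S * Sᵀ) *ᵥ b : ℝ) : ℂ) := by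
    intro a b
    have hTx : ∀ (a : Fin n → ℝ) k, T a k = inner ℂ
        (WithLp.toLp 2 fun i => (((Sᵀ *ᵥ a) i : ℝ) : ℂ)) (hH.eigenvectorBasis k) := by
      intro a k
      rw [EuclideanSpace.inner_eq_star_dotProduct]
      simp only [hT, hz]
      rw [dotProduct_mulVec, dotProduct_comm]
      congr 1
      ext i
      simp [vecMul, mulVec, dotProduct, mul_comm]
    simp only [hTx]
    have h1 := hH.eigenvectorBasis.sum_inner_mul_inner
      (WithLp.toLp 2 fun i => (((Sᵀ *ᵥ a) i : ℝ) : ℂ))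
      (WithLp.toLp 2 fun i => (((Sᵀ *ᵥ b) i : ℝ) : ℂ))
    simp only [← starRingEnd_apply, inner_conj_symm]
    rw [h1, EuclideanSpace.inner_eq_star_dotProduct, ← mulVec_mulVec, dotProduct_mulVec,
      ← mulVec_transpose, dotProduct_comm]
    simp [dotProduct]
  have hFz : ∀ k, F.map (algebraMap ℝ ℂ) *ᵥ z k =
      (Complex.I * ((-hH.eigenvalues k : ℝ) : ℂ)) • z k := by
    intro k
    have h1 : F.map (algebraMap ℝ ℂ) * S.map (algebraMap ℝ ℂ) =
        S.map (algebraMap ℝ ℂ) * K.map (algebraMap ℝ ℂ) := by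
      rw [← Matrix.map_mul, ← Matrix.map_mul, hSK]
    have h2 : K.map (algebraMap ℝ ℂ) *ᵥ x k =
        (Complex.I * ((-hH.eigenvalues k : ℝ) : ℂ)) • x k := by
      have h3 := congrArg (fun y => (-Complex.I) • y) (hH.mulVec_eigenvectorBasis k)
      simp only [smul_mulVec, smul_smul, neg_mul, Complex.I_mul_I, neg_neg, one_smul] at h3
      rw [hx]
      simp only
      rw [h3]
      ext i
      simp
      ring
    rw [hz]
    simp only
    rw [mulVec_mulVec, h1, ← mulVec_mulVec, h2, mulVec_smul]
  by_contra hcon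
  push Not at hcon
  have hpos : ∀ k, z k ≠ 0 → 0 < ‖T u k‖ ^ 2 - (T c k * star (T u k)).re :=
    fun k hk => sub_pos.2 (hcon _ (z k) hk (hFz k))
  have hnonneg : ∀ k, 0 ≤ ‖T u k‖ ^ 2 - (T c k * star (T u k)).re := by
    intro k
    by_cases hk : z k = 0
    · simp [hT, hk]
    · exact (hpos k hk).le
  have hsum : ∑ k, (‖T u k‖ ^ 2 - (T c k * star (T u k)).re) ≤ 0 := by
    have h1 := congrArg Complex.re (hparseval u u)
    have h2 := congrArg Complex.re (hparseval c u)
    rw [Complex.re_sum, Complex.ofReal_re] at h1 h2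
    rw [Finset.sum_sub_distrib, h2]
    have h3 : ∀ k, (T u k * star (T u k)).re = ‖T u k‖ ^ 2 := by
      intro k
      rw [← starRingEnd_apply, Complex.mul_conj, Complex.ofReal_re, Complex.normSq_eq_norm_sq]
    simp only [h3] at h1
    have h4 : c ⬝ᵥ (S * Sᵀ) *ᵥ u = u ⬝ᵥ (S * Sᵀ) *ᵥ c := by
      rw [dotProduct_mulVec, ← mulVec_transpose, transpose_mul, transpose_transpose,
        dotProduct_comm]
    rw [h1, h4]
    linarith
  have hz0 : ∀ k, z k = 0 := by
    intro k
    by_contra hk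
    have h1 := Finset.single_le_sum (fun k _ => hnonneg k) (Finset.mem_univ k)
    exact ((hpos k hk).trans_le (h1.trans hsum)).false
  apply hS
  ext i j
  have h1 := hparseval (Pi.single i 1) (Pi.single j 1)
  simp only [hT, hz0] at h1
  simpa using h1.symm

/-- Failure of the circle criterion at one frequency gives `A * B` a negative real eigenvalue. -/
theorem IsStable.exists_det_eq_zero_of_frequency {n : ℕ}
    {A B : Matrix (Fin n) (Fin n) ℝ} (hA : IsStable A) (hB : IsStable B) {b c u : Fin n → ℝ}
    (hAB : A - B = vecMulVec b c) {ω : ℝ} {z : Fin n → ℂ} (hz : z ≠ 0)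
    (hFz : (A - vecMulVec b u).map (algebraMap ℝ ℂ) *ᵥ z = (Complex.I * ω) • z)
    (hle : ‖(fun i => (u i : ℂ)) ⬝ᵥ z‖ ^ 2 ≤
      (((fun i => (c i : ℂ)) ⬝ᵥ z) * star ((fun i => (u i : ℂ)) ⬝ᵥ z)).re) :
    ∃ t : ℝ, 0 < t ∧ (t • (1 : Matrix (Fin n) (Fin n) ℝ) + A * B).det = 0 := by
  set s := (fun i => (u i : ℂ)) ⬝ᵥ z with hs
  have hAz : A.map (algebraMap ℝ ℂ) *ᵥ z = (Complex.I * ω) • z + s • (fun i => (b i : ℂ)) := by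
    have h1 : (A - vecMulVec b u).map (algebraMap ℝ ℂ) = A.map (algebraMap ℝ ℂ) -
        vecMulVec (fun i => (b i : ℂ)) (fun i => (u i : ℂ)) := by
      ext i j
      simp [vecMulVec_apply]
    rw [h1, sub_mulVec, vecMulVec_mulVec, sub_eq_iff_eq_add, ← hs] at hFz
    rw [hFz]
    ext i
    simp [mul_comm]
  have hs0 : s ≠ 0 := by
    intro h
    rw [h, zero_smul, add_zero] at hAz
    exact hz (hA.eq_zero_of_mulVec_eq_smul (by simp) hAz)
  set y := s⁻¹ • z with hy
  have hAy : A.map (algebraMap ℝ ℂ) *ᵥ y = (Complex.I * ω) • y + (fun i => (b i : ℂ)) := by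
    rw [hy, mulVec_smul, hAz, smul_add, smul_comm, inv_smul_smul₀ hs0]
  have hcy : 1 ≤ ((fun i => (c i : ℂ)) ⬝ᵥ y).re := by
    have h1 : (fun i => (c i : ℂ)) ⬝ᵥ z = s * ((fun i => (c i : ℂ)) ⬝ᵥ y) := by
      rw [hy, dotProduct_smul, smul_eq_mul, mul_inv_cancel_left₀ hs0]
    have h2 : s * ((fun i => (c i : ℂ)) ⬝ᵥ y) * star s =
        ((‖s‖ ^ 2 : ℝ) : ℂ) * ((fun i => (c i : ℂ)) ⬝ᵥ y) := by
      rw [← Complex.normSq_eq_norm_sq, ← Complex.mul_conj, starRingEnd_apply]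
      ring
    rw [h1, h2, Complex.re_ofReal_mul] at hle
    have h3 : 0 < ‖s‖ ^ 2 := by positivity
    exact le_of_mul_le_mul_left (by rwa [mul_one]) h3
  set p : Fin n → ℝ := fun i => (y i).re with hp
  set q : Fin n → ℝ := fun i => (y i).im with hq
  have hAp : A *ᵥ p = -(ω • q) + b := by
    ext i
    have := congrArg Complex.re (congrFun hAy i)
    simpa [mulVec, dotProduct, hp, hq] using this
  have hAq : A *ᵥ q = ω • p := by
    ext i
    have := congrArg Complex.im (congrFun hAy i)
    simpa [mulVec, dotProduct, hp, hq] using this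
  have hcp : 1 ≤ c ⬝ᵥ p := by
    simpa [dotProduct, hp] using hcy
  have hres : (ω ^ 2 • (1 : Matrix (Fin n) (Fin n) ℝ) + A * A) *ᵥ p = A *ᵥ b := by
    rw [add_mulVec, smul_mulVec, one_mulVec, ← mulVec_mulVec, hAp, mulVec_add, mulVec_neg,
      mulVec_smul, hAq, smul_smul, sq]
    abel
  have hfact : ω ^ 2 • (1 : Matrix (Fin n) (Fin n) ℝ) + A * B =
      (ω ^ 2 • (1 : Matrix (Fin n) (Fin n) ℝ) + A * A) * (1 - vecMulVec p c) := by
    rw [mul_sub, mul_one, mul_vecMulVec, hres, ← mul_vecMulVec, ← hAB, mul_sub]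
    abel
  have hdet : (ω ^ 2 • (1 : Matrix (Fin n) (Fin n) ℝ) + A * B).det ≤ 0 := by
    have h1 : (1 - vecMulVec p c).det = 1 - c ⬝ᵥ p := by
      rw [sub_eq_add_neg, ← neg_vecMulVec, vecMulVec_eq Unit,
        det_one_add_replicateCol_mul_replicateRow, dotProduct_neg, sub_eq_add_neg]
    rw [hfact, det_mul, h1]
    exact mul_nonpos_of_nonneg_of_nonpos (hA.sq_smul_one_add_sq_det_pos ω).le (by linarith)
  obtain ⟨t, ht, ht0⟩ := exists_le_det_smul_one_add_eq_zero _ hdet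
  refine ⟨t, ((sq_nonneg ω).trans ht).lt_of_ne ?_, ht0⟩
  rintro rfl
  rw [zero_smul, zero_add] at ht0
  exact (hA.det_mul_pos hB).ne' ht0

theorem IsStable.exists_det_eq_zero_of_posSemidef {n : ℕ}
    {A B : Matrix (Fin n) (Fin n) ℝ} (hA : IsStable A) (hB : IsStable B) {b c : Fin n → ℝ}
    (hAB : A - B = vecMulVec b c) {X Y : Matrix (Fin n) (Fin n) ℝ} (hX : X.PosSemidef)
    (hY : Y.PosSemidef) (hXY : X + Y ≠ 0) (h0 : A * X + X * Aᵀ + (B * Y + Y * Bᵀ) = 0) :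
    ∃ t : ℝ, 0 < t ∧ (t • (1 : Matrix (Fin n) (Fin n) ℝ) + A * B).det = 0 := by
  obtain ⟨S, R, hS, hR, hSS, hcomm, hSRS⟩ := (hX.add hY).exists_sqrt_pseudoinverse
  set Z := X + Y with hZ
  have hYt : Yᵀ = Y := hY.1
  have hZt : Zᵀ = Z := (hX.add hY).1
  have hSSR : S * S * R = S := by rw [mul_assoc, hcomm, ← mul_assoc, hSRS]
  have hYker : ∀ x, S *ᵥ x = 0 → Y *ᵥ x = 0 := by
    intro x hx
    have hZx : x ⬝ᵥ Z *ᵥ x = 0 := by rw [← hSS, ← mulVec_mulVec, hx, mulVec_zero, dotProduct_zero]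
    have h1 := hX.dotProduct_mulVec_nonneg x
    have h2 := hY.dotProduct_mulVec_nonneg x
    rw [hZ, add_mulVec, dotProduct_add] at hZx
    rw [star_trivial] at h1 h2
    exact (hY.dotProduct_mulVec_zero_iff x).1 (by rw [star_trivial]; linarith)
  have hYRS : Y * (R * S) = Y := by
    have h1 : Y * (1 - R * S) = 0 := by
      refine ext_of_mulVec_single fun i => ?_
      rw [← mulVec_mulVec, zero_mulVec]
      refine hYker _ ?_
      rw [mulVec_mulVec, mul_sub, mul_one, ← mul_assoc, hSRS, sub_self, zero_mulVec]
    rw [mul_sub, mul_one, sub_eq_zero] at h1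
    exact h1.symm
  have hSRY : S * R * Y = Y := by
    have h1 := congrArg transpose hYRS
    rwa [transpose_mul, transpose_mul, hS, hR, hYt] at h1
  set u := (R * R * Y) *ᵥ c with hu
  have hZu : Z *ᵥ u = Y *ᵥ c := by
    rw [hu, mulVec_mulVec, ← hSS]
    congr 1
    calc S * S * (R * R * Y) = S * S * R * R * Y := by simp only [mul_assoc]
      _ = Y := by rw [hSSR, hSRY]
  set F := A - vecMulVec b u with hF
  have hFZ : F * Z + Z * Fᵀ = 0 := by
    have h1 : F * Z = A * Z - vecMulVec b (Y *ᵥ c) := by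
      rw [hF, sub_mul, vecMulVec_mul, ← mulVec_transpose, hZt, hZu]
    have h2 : Z * Fᵀ = Z * Aᵀ - vecMulVec (Y *ᵥ c) b := by
      have := congrArg transpose h1
      rwa [transpose_mul, hZt, transpose_sub (A * Z), transpose_mul, hZt, transpose_vecMulVec] at this
    have h3 : (A - B) * Y = vecMulVec b (Y *ᵥ c) := by
      rw [hAB, vecMulVec_mul, ← mulVec_transpose, hYt]
    have h4 : Y * (A - B)ᵀ = vecMulVec (Y *ᵥ c) b := by
      rw [hAB, transpose_vecMulVec, mul_vecMulVec]
    rw [h1, h2, ← h3, ← h4, hZ, ← h0, transpose_sub]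
    noncomm_ring
  have hFZ' : F * Z = -(Z * Fᵀ) := eq_neg_of_add_eq_zero_left hFZ
  have hRSS : R * S * S = S := by rw [← hcomm, hSRS]
  have hSK : S * (R * F * S) = F * S := by
    have h1 : F * S = -(S * S * Fᵀ * R) := by
      calc F * S = F * (S * S * R) := by rw [hSSR]
        _ = F * Z * R := by rw [hSS, mul_assoc]
        _ = -(S * S * Fᵀ * R) := by rw [hFZ', hSS, neg_mul]
    calc S * (R * F * S) = S * R * (F * S) := by simp only [mul_assoc]
      _ = -(S * R * S * S * Fᵀ * R) := by rw [h1, mul_neg]; simp only [mul_assoc]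
      _ = F * S := by rw [hSRS, h1]
  have hK : (R * F * S)ᵀ = -(R * F * S) := by
    rw [transpose_mul, transpose_mul, hS, hR]
    calc S * (Fᵀ * R) = R * S * S * (Fᵀ * R) := by rw [hRSS]
      _ = R * (Z * Fᵀ) * R := by rw [← hSS]; simp only [mul_assoc]
      _ = -(R * F * (S * S * R)) := by
        rw [eq_neg_of_add_eq_zero_right hFZ, ← hSS]; simp only [mul_assoc, mul_neg, neg_mul]
      _ = -(R * F * S) := by rw [hSSR]
  have hSSt : S * Sᵀ = Z := by rw [hS, hSS]
  have hle : u ⬝ᵥ (S * Sᵀ) *ᵥ u ≤ u ⬝ᵥ (S * Sᵀ) *ᵥ c := by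
    rw [hSSt]
    have h1 := hX.dotProduct_mulVec_nonneg u
    have h2 := hY.dotProduct_mulVec_nonneg (c - u)
    have hsymm : ∀ M : Matrix (Fin n) (Fin n) ℝ, Mᵀ = M → ∀ v w : Fin n → ℝ,
        v ⬝ᵥ M *ᵥ w = w ⬝ᵥ M *ᵥ v := by
      intro M hM v w
      rw [dotProduct_mulVec, ← mulVec_transpose, dotProduct_comm, hM]
    rw [hsymm Z hZt u c, hZu]
    have h3 : u ⬝ᵥ Z *ᵥ u = u ⬝ᵥ X *ᵥ u + u ⬝ᵥ Y *ᵥ u := by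
      rw [hZ, add_mulVec, dotProduct_add]
    have h4 : u ⬝ᵥ Z *ᵥ u = u ⬝ᵥ Y *ᵥ c := by rw [hZu]
    rw [star_trivial] at h1 h2
    rw [mulVec_sub, dotProduct_sub, sub_dotProduct, sub_dotProduct, hsymm Y hYt c u] at h2
    linarith
  obtain ⟨ω, z, hz, hFz, hineq⟩ :=
    exists_imaginary_eigenvector hSK hK (by rwa [hSSt]) hle
  exact hA.exists_det_eq_zero_of_frequency hB hAB hz hFz hineq

theorem Matrix.PosSemidef.abs_apply_le_trace {n : ℕ} {X : Matrix (Fin n) (Fin n) ℝ}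
    (hX : X.PosSemidef) (i j : Fin n) : |X i j| ≤ X.trace := by
  have hdiag : ∀ k, X k k ≤ X.trace := fun k =>
    Finset.single_le_sum (f := fun k => X k k) (fun k _ => hX.diag_nonneg) (Finset.mem_univ k)
  have hij : X j i = X i j := congrFun (congrFun hX.1 i) j
  have h1 := hX.dotProduct_mulVec_nonneg (Pi.single i 1 + Pi.single j 1)
  have h2 := hX.dotProduct_mulVec_nonneg (Pi.single i 1 - Pi.single j 1)
  simp [mulVec_add, mulVec_sub, hij] at h1 h2
  rw [abs_le]
  constructor <;> linarith [hdiag i, hdiag j]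

theorem Matrix.isCompact_posSemidef_pairs (n : ℕ) :
    IsCompact {p : Matrix (Fin n) (Fin n) ℝ × Matrix (Fin n) (Fin n) ℝ |
      p.1.PosSemidef ∧ p.2.PosSemidef ∧ p.1.trace + p.2.trace = 1} := by
  set I : Set (Matrix (Fin n) (Fin n) ℝ) :=
    Set.univ.pi fun _ => Set.univ.pi fun _ => Set.Icc (-1 : ℝ) 1 with hI
  have hIc : IsCompact I := isCompact_univ_pi fun _ => isCompact_univ_pi fun _ => isCompact_Icc
  have hclosed : IsClosed {X : Matrix (Fin n) (Fin n) ℝ | X.PosSemidef} := by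
    simp only [posSemidef_iff_dotProduct_mulVec, Set.ofPred_and, Set.ofPred_forall]
    refine IsClosed.inter (isClosed_eq (by fun_prop) (by fun_prop)) ?_
    exact isClosed_iInter fun x => isClosed_le (by fun_prop) (by fun_prop)
  have hmem : ∀ X : Matrix (Fin n) (Fin n) ℝ, X.PosSemidef → X.trace ≤ 1 → X ∈ I := by
    intro X hX htr i _ j _
    exact abs_le.1 ((hX.abs_apply_le_trace i j).trans htr)
  refine (hIc.prod hIc).of_isClosed_subset ?_ ?_
  · exact (hclosed.preimage continuous_fst).inter ((hclosed.preimage continuous_snd).inter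
      (isClosed_eq (by fun_prop) (by fun_prop)))
  · rintro ⟨X, Y⟩ ⟨hX, hY, htr⟩
    have h1 := hX.trace_nonneg
    have h2 := hY.trace_nonneg
    exact ⟨hmem X hX (by simp only at htr; linarith), hmem Y hY (by simp only at htr; linarith)⟩

theorem Matrix.exists_trace_mul_neg {n : ℕ} {s : Set (Matrix (Fin n) (Fin n) ℝ)}
    (hs : Convex ℝ s) (hsc : IsCompact s) (h0 : (0 : Matrix (Fin n) (Fin n) ℝ) ∉ s) :
    ∃ P : Matrix (Fin n) (Fin n) ℝ, ∀ M ∈ s, (P * M).trace < 0 := by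
  have : LocallyConvexSpace ℝ (Matrix (Fin n) (Fin n) ℝ) :=
    inferInstanceAs (LocallyConvexSpace ℝ (Fin n → Fin n → ℝ))
  obtain ⟨f, r, hf, hr⟩ := geometric_hahn_banach_closed_point hs hsc.isClosed h0
  rw [map_zero] at hr
  refine ⟨of fun j i => f (single i j 1), fun M hM => ?_⟩
  have h1 : f M = (of (fun j i => f (single i j 1)) * M).trace := by
    conv_lhs => rw [matrix_eq_sum_single M]
    rw [map_sum, trace]
    simp only [diag_apply, mul_apply, of_apply]
    rw [Finset.sum_comm]
    refine Finset.sum_congr rfl fun i _ => ?_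
    rw [map_sum]
    refine Finset.sum_congr rfl fun j _ => ?_
    have : single i j (M i j) = M i j • single i j (1 : ℝ) := by simp [smul_single]
    rw [this, map_smul, smul_eq_mul, mul_comm]
  rw [← h1]
  exact (hf M hM).trans hr

/-- Dual certificate for the absence of a common quadratic Lyapunov function. -/
theorem IsStable.exists_posSemidef_of_not_hasCQLF {n : ℕ} {A B : Matrix (Fin n) (Fin n) ℝ}
    (hA : IsStable A) (h : ¬ HasCQLF A B) :
    ∃ X Y : Matrix (Fin n) (Fin n) ℝ, X.PosSemidef ∧ Y.PosSemidef ∧ X + Y ≠ 0 ∧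
      A * X + X * Aᵀ + (B * Y + Y * Bᵀ) = 0 := by
  set s := {p : Matrix (Fin n) (Fin n) ℝ × Matrix (Fin n) (Fin n) ℝ |
      p.1.PosSemidef ∧ p.2.PosSemidef ∧ p.1.trace + p.2.trace = 1} with hs
  set T : Matrix (Fin n) (Fin n) ℝ × Matrix (Fin n) (Fin n) ℝ → Matrix (Fin n) (Fin n) ℝ :=
    fun p => A * p.1 + p.1 * Aᵀ + (B * p.2 + p.2 * Bᵀ) with hT
  by_cases h0 : (0 : Matrix (Fin n) (Fin n) ℝ) ∈ T '' s
  · obtain ⟨⟨X, Y⟩, ⟨hX, hY, htr⟩, hXY⟩ := h0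
    refine ⟨X, Y, hX, hY, fun hsum => ?_, hXY⟩
    rw [← trace_add, hsum, trace_zero] at htr
    exact zero_ne_one htr
  refine absurd ?_ h
  have hTc : Continuous T := by fun_prop
  have hconv : Convex ℝ (T '' s) := by
    rintro _ ⟨⟨X, Y⟩, ⟨hX, hY, htr⟩, rfl⟩ _ ⟨⟨X₂, Y₂⟩, ⟨hX₂, hY₂, htr₂⟩, rfl⟩ a b ha hb hab
    refine ⟨(a • X + b • X₂, a • Y + b • Y₂), ⟨(hX.smul ha).add (hX₂.smul hb),
      (hY.smul ha).add (hY₂.smul hb), ?_⟩, ?_⟩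
    · simp only [trace_add, trace_smul, smul_eq_mul] at htr htr₂ ⊢
      linear_combination a * htr + b * htr₂ + hab
    · simp only [hT, mul_add, add_mul, mul_smul_comm, smul_mul_assoc, smul_add]
      abel
  obtain ⟨P, hP⟩ := exists_trace_mul_neg hconv ((isCompact_posSemidef_pairs n).image hTc) h0
  set Q := P + Pᵀ with hQ
  have hQt : Qᵀ = Q := by rw [hQ, transpose_add, transpose_transpose, add_comm]
  have key : ∀ (M : Matrix (Fin n) (Fin n) ℝ) (x : Fin n → ℝ),
      x ⬝ᵥ (Q * M + Mᵀ * Q) *ᵥ x = 2 * (P * (M * vecMulVec x x + vecMulVec x x * Mᵀ)).trace := by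
    intro M x
    have hN : (M * vecMulVec x x + vecMulVec x x * Mᵀ)ᵀ =
        M * vecMulVec x x + vecMulVec x x * Mᵀ := by
      rw [transpose_add, transpose_mul, transpose_mul, transpose_vecMulVec, transpose_transpose,
        add_comm]
    rw [← trace_mul_lyapunov_vecMulVec, hQ, add_mul, trace_add, two_mul, add_right_inj]
    nth_rewrite 1 [← hN]
    rw [← transpose_mul, trace_transpose, trace_mul_comm]
  have hdef : ∀ M : Matrix (Fin n) (Fin n) ℝ,
      (∀ x : Fin n → ℝ, x ⬝ᵥ x = 1 →
        (P * (M * vecMulVec x x + vecMulVec x x * Mᵀ)).trace < 0) →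
      (-(Q * M + Mᵀ * Q)).PosDef := by
    intro M hM
    refine PosDef.of_dotProduct_mulVec_pos ?_ fun x hx => ?_
    · rw [IsHermitian, conjTranspose_eq_transpose_of_trivial, transpose_neg, transpose_add,
        transpose_mul, transpose_mul, transpose_transpose, hQt, add_comm]
    · have hxx : 0 < x ⬝ᵥ x := by simpa using dotProduct_star_self_pos_iff.2 hx
      have hr : 0 < (Real.sqrt (x ⬝ᵥ x))⁻¹ := inv_pos.2 (Real.sqrt_pos.2 hxx)
      set r := (Real.sqrt (x ⬝ᵥ x))⁻¹ with hrdef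
      have hrr : r * r * (x ⬝ᵥ x) = 1 := by
        rw [hrdef, ← mul_inv, Real.mul_self_sqrt hxx.le, inv_mul_cancel₀ hxx.ne']
      have h1 := hM (r • x) (by
        rw [smul_dotProduct, dotProduct_smul, smul_eq_mul, smul_eq_mul, ← mul_assoc, hrr])
      have h2 := key M (r • x)
      rw [mulVec_smul, smul_dotProduct, dotProduct_smul, smul_eq_mul, smul_eq_mul,
        ← mul_assoc] at h2
      rw [star_trivial, neg_mulVec, dotProduct_neg, Left.neg_pos_iff]
      nlinarith [mul_pos hr hr]
  have hvec : ∀ x : Fin n → ℝ, (vecMulVec x x).PosSemidef := fun x => by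
    simpa using posSemidef_vecMulVec_self_star x
  have hQA : (-(Q * A + Aᵀ * Q)).PosDef := hdef A fun x hx => by
    simpa [hT] using hP _ ⟨(vecMulVec x x, 0), ⟨hvec x, PosSemidef.zero, by simp [hx]⟩, rfl⟩
  have hQB : (-(Q * B + Bᵀ * Q)).PosDef := hdef B fun x hx => by
    simpa [hT] using hP _ ⟨(0, vecMulVec x x), ⟨PosSemidef.zero, hvec x, by simp [hx]⟩, rfl⟩
  exact ⟨Q, hA.posDef_of_neg_lyapunov_posDef hQt hQA, hQA, hQB⟩

/-- For stable `A`, `B` with `A - B` of rank one: no CQLF exists iff there are nonzero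
vectors `v`, `w` with `A·v·vᵀ + v·vᵀ·Aᵀ + B·w·wᵀ + w·wᵀ·Bᵀ = 0`. -/
theorem no_CQLF_iff_rank_one_intersection {n : ℕ} (A B : Matrix (Fin n) (Fin n) ℝ)
    (hA : IsStable A) (hB : IsStable B) (hrank : (A - B).rank = 1) :
    ¬ HasCQLF A B ↔
      ∃ (v w : Fin n → ℝ), v ≠ 0 ∧ w ≠ 0 ∧
        A * vecMulVec v v + vecMulVec v v * Aᵀ + B * vecMulVec w w + vecMulVec w w * Bᵀ = 0 := by
  obtain ⟨b, c, hbc⟩ := exists_eq_vecMulVec_of_rank_eq_one hrank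
  constructor
  · intro h
    obtain ⟨X, Y, hX, hY, hXY, h0⟩ := hA.exists_posSemidef_of_not_hasCQLF h
    obtain ⟨t, ht, hdet⟩ := hA.exists_det_eq_zero_of_posSemidef hB hbc hX hY hXY h0
    exact exists_rank_one_of_det_eq_zero ht hdet
  · rintro ⟨v, w, hv, hw, h0⟩ h
    exact h.not_exists_rank_one hv hw h0
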